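/- For any graph G on n vertices and any odd t ≥ 1, n^2 · (number of homomorphisms from P_{t+2} to G)^t ≥ (number of homomorphisms from P_t to G)^{t+2}, where P_j denotes the path with j edges. -/

import Mathlib

/-- The number of graph homomorphisms from `F` to `G`. -/
noncomputable def homCount {α β : Type*} (F : SimpleGraph α) (G : SimpleGraph β) : ℕ :=
  Nat.card (F →g G)

/-!
Let `w k v` be the number of walks with `k` edges from `v`, and let `N` and `W` be the numbers of
walks with `t` and `t + 2` edges. Traversing the `i`-th edge of a walk three times instead of once
turns walks with `t` edges into walks with `t + 2` edges, and the log-sum inequality over all edges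
bounds `N * log (N / W)` by `S i - S (i + 1)`, where
`S i = ∑ v, w i v * w (t - i) v * log (w i v / w (t - i) v)`.
Summing over the `t` edges telescopes to `S 0 - S t = 2 * S 0`, twice the entropy-like sum
`∑ v, w t v * log (1 / w t v)`, which a second log-sum inequality bounds by `N * log (n / N)`.
Hence `t * log (N / W) ≤ 2 * log (n / N)`.
-/

open scoped Matrix

section LogSum

theorem sum_mul_log_sum_div_sum_le {ι : Type*} (s : Finset ι) {p b : ι → ℝ}
    (hp : ∀ i ∈ s, 0 ≤ p i) (hb : ∀ i ∈ s, 0 ≤ b i) (hpb : ∀ i ∈ s, b i = 0 → p i = 0) :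
    (∑ i ∈ s, p i) * Real.log ((∑ i ∈ s, p i) / ∑ i ∈ s, b i) ≤
      ∑ i ∈ s, p i * Real.log (p i / b i) := by
  have mul_div : ∀ i ∈ s, b i * (p i / b i) = p i := fun i hi ↦ mul_div_cancel_of_imp' (hpb i hi)
  rcases (Finset.sum_nonneg hb).eq_or_lt with hB | hB
  · have hp0 : ∀ i ∈ s, p i = 0 := fun i hi ↦
      hpb i hi ((Finset.sum_eq_zero_iff_of_nonneg hb).1 hB.symm i hi)
    rw [Finset.sum_eq_zero hp0, zero_mul, Finset.sum_eq_zero fun i hi ↦ by rw [hp0 i hi, zero_mul]]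
  · have jensen := Real.convexOn_mul_log.map_centerMass_le (w := b) (p := fun i ↦ p i / b i)
      hb hB (fun i hi ↦ div_nonneg (hp i hi) (hb i hi))
    have center : s.centerMass b (fun i ↦ p i / b i) = (∑ i ∈ s, p i) / ∑ i ∈ s, b i := by
      simp only [Finset.centerMass, smul_eq_mul, ← div_eq_inv_mul, Finset.sum_congr rfl mul_div]
    have average : s.centerMass b ((fun x ↦ x * Real.log x) ∘ fun i ↦ p i / b i) =
        (∑ i ∈ s, p i * Real.log (p i / b i)) / ∑ i ∈ s, b i := by
      rw [Finset.centerMass, smul_eq_mul, ← div_eq_inv_mul]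
      congr 1
      refine Finset.sum_congr rfl fun i hi ↦ ?_
      rw [Function.comp_apply, smul_eq_mul, ← mul_assoc, mul_div i hi]
    rwa [center, average, div_mul_eq_mul_div, div_le_div_iff_of_pos_right hB] at jensen

variable {ι : Type*} [Fintype ι]

/-- The weighted sum of log-ratios of `x` and `y`. When `x i` counts the initial segments of a walk
ending at `i` and `y i` its final segments starting at `i`, it serves as the potential that
telescopes along the walk. Terms with `x i = 0` or `y i = 0` vanish, so the junk value of the
logarithm there is harmless. -/
noncomputable def logRatioSum (x y : ι → ℝ) : ℝ :=
  ∑ i, x i * y i * Real.log (x i / y i)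

theorem logRatioSum_swap (x y : ι → ℝ) : logRatioSum y x = -logRatioSum x y := by
  rw [logRatioSum, logRatioSum, ← Finset.sum_neg_distrib]
  refine Finset.sum_congr rfl fun i _ ↦ ?_
  rw [← inv_div (x i), Real.log_inv]
  ring

theorem logRatioSum_one_left_le {x : ι → ℝ} (hx : 0 ≤ x) :
    logRatioSum 1 x ≤ (∑ i, x i) * Real.log (Fintype.card ι / ∑ i, x i) := by
  rw [logRatioSum_swap x 1, neg_le, ← mul_neg, ← Real.log_inv, inv_div]
  simpa [logRatioSum] using sum_mul_log_sum_div_sum_le (b := 1) Finset.univ (fun i _ ↦ hx i)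
    (fun _ _ ↦ zero_le_one) (by simp)

end LogSum

section Bilinear

variable {m n R : Type*} [Fintype n]

theorem mulVec_nonneg [Semiring R] [PartialOrder R] [IsOrderedRing R] {A : Matrix m n R}
    {y : n → R} (hA : ∀ u v, 0 ≤ A u v) (hy : 0 ≤ y) : 0 ≤ A *ᵥ y :=
  fun u ↦ Finset.sum_nonneg fun v _ ↦ mul_nonneg (hA u v) (hy v)

theorem mulVec_apply_pos [Semiring R] [PartialOrder R] [IsStrictOrderedRing R] {A : Matrix m n R}
    {y : n → R} (hA : ∀ u v, 0 ≤ A u v) (hy : 0 ≤ y) {u : m} {v : n} (huv : 0 < A u v)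
    (hv : 0 < y v) : 0 < (A *ᵥ y) u :=
  Finset.sum_pos' (fun w _ ↦ mul_nonneg (hA u w) (hy w)) ⟨v, Finset.mem_univ v, mul_pos huv hv⟩

theorem vecMul_nonneg [Semiring R] [PartialOrder R] [IsOrderedRing R] {A : Matrix n m R}
    {x : n → R} (hA : ∀ u v, 0 ≤ A u v) (hx : 0 ≤ x) : 0 ≤ x ᵥ* A :=
  fun v ↦ Finset.sum_nonneg fun u _ ↦ mul_nonneg (hx u) (hA u v)

variable [Fintype m]

theorem sum_prod_mul_apply_mul_fst [CommSemiring R] (A : Matrix m n R) (x f : m → R)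
    (y : n → R) :
    ∑ e : m × n, x e.1 * A e.1 e.2 * y e.2 * f e.1 = ∑ u, x u * (A *ᵥ y) u * f u := by
  simp only [Fintype.sum_prod_type, Matrix.mulVec, dotProduct, Finset.mul_sum, Finset.sum_mul,
    mul_assoc]

theorem sum_prod_mul_apply_mul_snd [CommSemiring R] (A : Matrix m n R) (x : m → R)
    (y g : n → R) :
    ∑ e : m × n, x e.1 * A e.1 e.2 * y e.2 * g e.2 = ∑ v, y v * (x ᵥ* A) v * g v := by
  simp only [Fintype.sum_prod_type_right, Matrix.vecMul, dotProduct, Finset.sum_mul,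
    mul_comm (y _)]

theorem sum_prod_mul_apply_mul [CommSemiring R] (A : Matrix m n R) (x : m → R)
    (y : n → R) : ∑ e : m × n, x e.1 * A e.1 e.2 * y e.2 = x ⬝ᵥ A *ᵥ y := by
  simpa [dotProduct] using sum_prod_mul_apply_mul_fst A x 1 y

section Positivity

variable [CommSemiring R] [LinearOrder R] [IsStrictOrderedRing R] {A : Matrix m n R} {x : m → R}
  {y : n → R}

theorem pos_of_mul_apply_mul_pos (hA : ∀ u v, 0 ≤ A u v) (hx : 0 ≤ x) (hy : 0 ≤ y) {u : m} {v : n}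
    (h : 0 < x u * A u v * y v) :
    0 < x u ∧ 0 < A u v ∧ 0 < y v ∧ 0 < (A *ᵥ y) u ∧ 0 < (x ᵥ* A) v := by
  have hyv : 0 < y v := (hy v).lt_of_ne' (right_ne_zero_of_mul h.ne')
  have hxA : x u * A u v ≠ 0 := left_ne_zero_of_mul h.ne'
  have hxu : 0 < x u := (hx u).lt_of_ne' (left_ne_zero_of_mul hxA)
  have hAuv : 0 < A u v := (hA u v).lt_of_ne' (right_ne_zero_of_mul hxA)
  refine ⟨hxu, hAuv, hyv, mulVec_apply_pos hA hy hAuv hyv, ?_⟩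
  rw [← Matrix.mulVec_transpose]
  exact mulVec_apply_pos (fun v u ↦ hA u v) hx hAuv hxu

theorem dotProduct_mulVec_pos (hA : ∀ u v, 0 ≤ A u v) (hx : 0 ≤ x) (hy : 0 ≤ y)
    (h : 0 < x ⬝ᵥ A *ᵥ y) : 0 < (A *ᵥ y) ⬝ᵥ A *ᵥ (x ᵥ* A) := by
  rw [← sum_prod_mul_apply_mul] at h ⊢
  obtain ⟨e, -, he⟩ := Finset.exists_lt_of_sum_lt (f := fun _ ↦ (0 : R)) (by simpa using h)
  obtain ⟨-, hAe, -, hAy, hxA⟩ := pos_of_mul_apply_mul_pos hA hx hy he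
  have hAy0 := mulVec_nonneg hA hy
  have hxA0 := vecMul_nonneg hA hx
  exact Finset.sum_pos' (fun e _ ↦ mul_nonneg (mul_nonneg (hAy0 e.1) (hA e.1 e.2)) (hxA0 e.2))
    ⟨e, Finset.mem_univ e, by positivity⟩

end Positivity

variable {A : Matrix m n ℝ} {x : m → ℝ} {y : n → ℝ}

/-- The log-sum inequality over the entries of `A`, comparing `x u * A u v * y v` with
`(A *ᵥ y) u * A u v * (x ᵥ* A) v`, which corresponds to traversing the edge `u v` three times:
`A u v` cancels in the ratio, so its logarithm splits into a function of `u` and one of `v`. -/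
theorem dotProduct_mulVec_mul_log_le (hA : ∀ u v, 0 ≤ A u v) (hx : 0 ≤ x) (hy : 0 ≤ y) :
    (x ⬝ᵥ A *ᵥ y) * Real.log ((x ⬝ᵥ A *ᵥ y) / ((A *ᵥ y) ⬝ᵥ A *ᵥ (x ᵥ* A))) ≤
      logRatioSum x (A *ᵥ y) + logRatioSum y (x ᵥ* A) := by
  let p (e : m × n) : ℝ := x e.1 * A e.1 e.2 * y e.2
  let b (e : m × n) : ℝ := (A *ᵥ y) e.1 * A e.1 e.2 * (x ᵥ* A) e.2
  have hp (e) : 0 ≤ p e := mul_nonneg (mul_nonneg (hx e.1) (hA e.1 e.2)) (hy e.2)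
  have hb (e) : 0 ≤ b e :=
    mul_nonneg (mul_nonneg (mulVec_nonneg hA hy e.1) (hA e.1 e.2)) (vecMul_nonneg hA hx e.2)
  have hpb (e) (hbe : b e = 0) : p e = 0 := by
    by_contra hpe
    obtain ⟨-, hAe, -, hAy, hxA⟩ := pos_of_mul_apply_mul_pos hA hx hy ((hp e).lt_of_ne' hpe)
    exact (mul_pos (mul_pos hAy hAe) hxA).ne' hbe
  have log_split (e) : p e * Real.log (p e / b e) =
      p e * Real.log (x e.1 / (A *ᵥ y) e.1) + p e * Real.log (y e.2 / (x ᵥ* A) e.2) := by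
    rcases (hp e).eq_or_lt with h | h
    · simp [← h]
    · obtain ⟨hxe, hAe, hye, hAy, hxA⟩ := pos_of_mul_apply_mul_pos hA hx hy h
      rw [← mul_add, ← Real.log_mul (by positivity) (by positivity)]
      congr 2
      simp only [p, b]
      field_simp
  have log_sum := sum_mul_log_sum_div_sum_le Finset.univ (fun e _ ↦ hp e) (fun e _ ↦ hb e)
    (fun e _ ↦ hpb e)
  simp only [log_split, Finset.sum_add_distrib, p, b] at log_sum
  rwa [sum_prod_mul_apply_mul, sum_prod_mul_apply_mul,
    sum_prod_mul_apply_mul_fst A x (fun u ↦ Real.log (x u / (A *ᵥ y) u)),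
    sum_prod_mul_apply_mul_snd A x y (fun v ↦ Real.log (y v / (x ᵥ* A) v))] at log_sum

end Bilinear

section WalkWeight

variable {V R : Type*} [Fintype V] [DecidableEq V]

/-- The total weight `walkWeight A k v` of the walks with `k` edges starting at `v`, where `A u v`
is the weight of the step from `u` to `v`. -/
def walkWeight [Semiring R] (A : Matrix V V R) (k : ℕ) : V → R :=
  (A ^ k) *ᵥ 1

theorem walkWeight_zero [Semiring R] (A : Matrix V V R) : walkWeight A 0 = 1 := by
  rw [walkWeight, pow_zero, Matrix.one_mulVec]

theorem walkWeight_succ [Semiring R] (A : Matrix V V R) (k : ℕ) :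
    walkWeight A (k + 1) = A *ᵥ walkWeight A k := by
  rw [walkWeight, walkWeight, pow_succ', Matrix.mulVec_mulVec]

theorem walkWeight_nonneg [Semiring R] [PartialOrder R] [IsOrderedRing R] {A : Matrix V V R}
    (hA : ∀ u v, 0 ≤ A u v) (k : ℕ) : 0 ≤ walkWeight A k := by
  induction k with
  | zero => exact (walkWeight_zero A).symm ▸ zero_le_one
  | succ k ih => exact walkWeight_succ A k ▸ mulVec_nonneg hA ih

theorem walkWeight_vecMul [CommSemiring R] {A : Matrix V V R} (hS : A.IsSymm) (k : ℕ) :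
    walkWeight A k ᵥ* A = walkWeight A (k + 1) := by
  rw [walkWeight_succ, ← Matrix.mulVec_transpose, hS.eq]

theorem walkWeight_dotProduct [CommSemiring R] {A : Matrix V V R} (hS : A.IsSymm) (i j : ℕ) :
    walkWeight A i ⬝ᵥ walkWeight A j = ∑ v, walkWeight A (i + j) v := by
  induction i generalizing j with
  | zero => rw [walkWeight_zero, one_dotProduct, zero_add]
  | succ i ih =>
    rw [← walkWeight_vecMul hS, ← Matrix.dotProduct_mulVec, ← walkWeight_succ, ih,
      Nat.add_right_comm, add_assoc]

theorem sum_walkWeight_pos_add_two [CommSemiring R] [LinearOrder R] [IsStrictOrderedRing R]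
    {A : Matrix V V R} (hA : ∀ u v, 0 ≤ A u v) (hS : A.IsSymm) {k : ℕ}
    (h : 0 < ∑ v, walkWeight A (k + 1) v) : 0 < ∑ v, walkWeight A (k + 3) v := by
  have hk := dotProduct_mulVec_pos hA (walkWeight_nonneg hA 0) (walkWeight_nonneg hA k)
  simp only [walkWeight_vecMul hS, ← walkWeight_succ, walkWeight_dotProduct hS] at hk
  rw [zero_add] at hk
  exact hk h

variable {A : Matrix V V ℝ}

theorem sum_walkWeight_mul_log_le (hA : ∀ u v, 0 ≤ A u v) (hS : A.IsSymm) (i j : ℕ) :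
    (∑ v, walkWeight A (i + j + 1) v) *
        Real.log ((∑ v, walkWeight A (i + j + 1) v) / ∑ v, walkWeight A (i + j + 3) v) ≤
      logRatioSum (walkWeight A i) (walkWeight A (j + 1)) +
        logRatioSum (walkWeight A j) (walkWeight A (i + 1)) := by
  have h := dotProduct_mulVec_mul_log_le hA (walkWeight_nonneg hA i) (walkWeight_nonneg hA j)
  simp only [walkWeight_vecMul hS, ← walkWeight_succ, walkWeight_dotProduct hS] at h
  rwa [show j + 1 + (i + 1 + 1) = i + j + 3 by ring, ← add_assoc] at h

theorem mul_sum_walkWeight_mul_log_le (hA : ∀ u v, 0 ≤ A u v) (hS : A.IsSymm) (i j : ℕ) :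
    i * ((∑ v, walkWeight A (i + j) v) *
        Real.log ((∑ v, walkWeight A (i + j) v) / ∑ v, walkWeight A (i + j + 2) v)) ≤
      logRatioSum 1 (walkWeight A (i + j)) + logRatioSum (walkWeight A j) (walkWeight A i) := by
  induction i generalizing j with
  | zero => simp [walkWeight_zero, logRatioSum_swap (walkWeight A j)]
  | succ i ih =>
    have previous := ih (j + 1)
    have crossing := sum_walkWeight_mul_log_le hA hS i j
    have swap := logRatioSum_swap (walkWeight A i) (walkWeight A (j + 1))
    rw [← add_assoc] at previous
    rw [Nat.add_right_comm i 1 j, Nat.cast_succ, add_one_mul]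
    linarith

theorem mul_log_sum_walkWeight_le (hA : ∀ u v, 0 ≤ A u v) (hS : A.IsSymm) {t : ℕ}
    (hN : 0 < ∑ v, walkWeight A t v) :
    t * Real.log ((∑ v, walkWeight A t v) / ∑ v, walkWeight A (t + 2) v) ≤
      2 * Real.log (Fintype.card V / ∑ v, walkWeight A t v) := by
  have telescoped := mul_sum_walkWeight_mul_log_le hA hS t 0
  have entropy := logRatioSum_one_left_le (walkWeight_nonneg hA t)
  simp only [add_zero, walkWeight_zero] at telescoped
  exact le_of_mul_le_mul_left (by linarith) hN

theorem sum_walkWeight_pow_le (hA : ∀ u v, 0 ≤ A u v) (hS : A.IsSymm) (t : ℕ) :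
    (∑ v, walkWeight A t v) ^ (t + 2) ≤
      (Fintype.card V : ℝ) ^ 2 * (∑ v, walkWeight A (t + 2) v) ^ t := by
  rcases t with _ | k
  · simp [walkWeight_zero]
  have sum_nonneg (j : ℕ) : 0 ≤ ∑ v, walkWeight A j v :=
    Finset.sum_nonneg fun v _ ↦ walkWeight_nonneg hA j v
  rcases (sum_nonneg (k + 1)).eq_or_lt with hN | hN
  · rw [← hN, zero_pow (by omega)]
    exact mul_nonneg (sq_nonneg _) (pow_nonneg (sum_nonneg _) _)
  have hW : 0 < ∑ v, walkWeight A (k + 1 + 2) v := sum_walkWeight_pos_add_two hA hS hN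
  have hn : 0 < (Fintype.card V : ℝ) := by
    obtain ⟨v, -, -⟩ := Finset.exists_ne_zero_of_sum_ne_zero hN.ne'
    exact Nat.cast_pos.2 (Fintype.card_pos_iff.2 ⟨v⟩)
  have hlog := mul_log_sum_walkWeight_le hA hS hN
  rw [Real.log_div hN.ne' hW.ne', Real.log_div hn.ne' hN.ne'] at hlog
  rw [← Real.log_le_log_iff (by positivity) (by positivity),
    Real.log_mul (by positivity) (by positivity), Real.log_pow, Real.log_pow, Real.log_pow]
  push_cast at hlog ⊢
  linarith

theorem sum_mul_prod_eq_dotProduct_walkWeight [CommSemiring R] (A : Matrix V V R) (k : ℕ)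
    (x : V → R) :
    ∑ f : Fin (k + 1) → V, x (f 0) * ∏ i : Fin k, A (f i.castSucc) (f i.succ) =
      x ⬝ᵥ walkWeight A k := by
  induction k generalizing x with
  | zero =>
    rw [← (Equiv.funUnique (Fin 1) V).symm.sum_comp]
    simp [walkWeight_zero, dotProduct_one]
  | succ k ih =>
    rw [walkWeight_succ, Matrix.dotProduct_mulVec, ← ih, ← (Fin.consEquiv fun _ ↦ V).sum_comp,
      Fintype.sum_prod_type_right]
    refine Finset.sum_congr rfl fun f _ ↦ ?_
    simp [Fin.consEquiv, Fin.prod_univ_succ, Matrix.vecMul, dotProduct, Finset.sum_mul, mul_assoc]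

end WalkWeight

section PathGraph

variable {V : Type*}

/-- Homomorphisms from a path graph as sequences of consecutively adjacent vertices. -/
def pathGraphHomEquiv (G : SimpleGraph V) (k : ℕ) :
    (SimpleGraph.pathGraph (k + 1) →g G) ≃
      {f : Fin (k + 1) → V // ∀ i : Fin k, G.Adj (f i.castSucc) (f i.succ)} where
  toFun φ := ⟨φ, fun i ↦ φ.map_rel (by simp [SimpleGraph.pathGraph_adj])⟩
  invFun f := ⟨f.1, by
    have adj_of_succ (a b : Fin (k + 1)) (h : a.val + 1 = b.val) : G.Adj (f.1 a) (f.1 b) := by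
      have hb : b = Fin.succ ⟨a.val, by omega⟩ := Fin.ext h.symm
      exact hb ▸ f.2 ⟨a.val, by omega⟩
    intro a b hab
    exact (SimpleGraph.pathGraph_adj.1 hab).elim (adj_of_succ a b) fun h ↦ (adj_of_succ b a h).symm⟩
  left_inv _ := rfl
  right_inv _ := rfl

theorem homCount_pathGraph_eq_sum_walkWeight [Fintype V] [DecidableEq V] (R : Type*)
    [CommSemiring R] (G : SimpleGraph V) [DecidableRel G.Adj] (k : ℕ) :
    (homCount (SimpleGraph.pathGraph (k + 1)) G : R) = ∑ v, walkWeight (G.adjMatrix R) k v := by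
  rw [homCount, Nat.card_congr (pathGraphHomEquiv G k), Nat.card_eq_fintype_card,
    Fintype.card_subtype, Finset.natCast_card_filter,
    ← one_dotProduct (walkWeight _ _), ← sum_mul_prod_eq_dotProduct_walkWeight]
  simp only [Pi.one_apply, one_mul, SimpleGraph.adjMatrix_apply, Finset.prod_ite_zero,
    Finset.prod_const_one, Finset.mem_univ, forall_true_left]

end PathGraph

theorem es_step_general {V : Type*} [Fintype V] (t : ℕ) (G : SimpleGraph V) :
    homCount (SimpleGraph.pathGraph (t + 1)) G ^ (t + 2) ≤
      Fintype.card V ^ 2 * homCount (SimpleGraph.pathGraph (t + 3)) G ^ t := by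
  classical
  have h := sum_walkWeight_pow_le (A := G.adjMatrix ℝ)
    (fun u v ↦ by rw [SimpleGraph.adjMatrix_apply]; positivity) G.isSymm_adjMatrix t
  rw [← homCount_pathGraph_eq_sum_walkWeight, ← homCount_pathGraph_eq_sum_walkWeight] at h
  exact_mod_cast h

/-- For any graph `G` on `n` vertices and odd `t ≥ 1`,
`n^2 · |Hom(P_{t+2}; G)|^t ≥ |Hom(P_t; G)|^{t+2}`, where the path with `j`
edges is `SimpleGraph.pathGraph (j+1)`. -/
theorem es_step (n t : ℕ) (ht : Odd t) (ht1 : 1 ≤ t) (G : SimpleGraph (Fin n)) :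
    n ^ 2 * homCount (SimpleGraph.pathGraph (t + 3)) G ^ t ≥
      homCount (SimpleGraph.pathGraph (t + 1)) G ^ (t + 2) := by
  simpa using es_step_general t G
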